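/- arXiv:1703.10962 — 2 statements merged into one kernel-verified Lean document; each statement's English description precedes it below -/
import Mathlib

section
/- Let V : S^{m-1} → S^{m-1} be a polynomial stochastic operator of degree d ≥ 2. Then V is Lipschitz on S^{m-1} with constant dm for the Euclidean norm: for all x, y ∈ S^{m-1}, ‖Vx − Vy‖₂ ≤ d·m·‖x − y‖₂. -/
/-!
The Euclidean norm is dominated by the `ℓ¹` norm, and `‖u‖₁ ≤ m ‖u‖₂`, so it suffices that `V` is
`d`-Lipschitz for the `ℓ¹` norm on the simplex. Since the heredity coefficients are nonnegative and
sum to one over the offspring type, `‖Vx - Vy‖₁` is at most the `ℓ¹` distance between the product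
distributions `x^{⊗d}` and `y^{⊗d}`. That distance is at most `d ‖x - y‖₁`
(`sum_abs_prod_sub_prod_le`): replace the factors of `x` by those of `y` one at a time.
-/

open Finset MeasureTheory Filter ProbabilityTheory

noncomputable section

/-- The space of heredity coefficient families `(p^{i₁,…,i_d}_k)` for `m` types and
degree `d`, encoded as functions `(Fin d → Fin m) → Fin m → ℝ`. -/
abbrev Coeffs (m d : ℕ) := (Fin d → Fin m) → Fin m → ℝ

/-- `p` is a family of heredity coefficients: nonnegative, symmetric under permutation
of the parental indices, and summing to one over the offspring type. -/
def IsHeredity (m d : ℕ) (p : Coeffs m d) : Prop :=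
  (∀ i k, 0 ≤ p i k) ∧
  (∀ (i : Fin d → Fin m) (π : Equiv.Perm (Fin d)) (k : Fin m), p (i ∘ π) k = p i k) ∧
  (∀ i : Fin d → Fin m, ∑ k, p i k = 1)

/-- `p` defines a Volterra PSO: heredity coefficients which vanish whenever the offspring
type `k` is not among the parental types. -/
def IsVolterra (m d : ℕ) (p : Coeffs m d) : Prop :=
  IsHeredity m d p ∧ ∀ (i : Fin d → Fin m) (k : Fin m), (∀ j, i j ≠ k) → p i k = 0

/-- The type `k` is purebred in the PSO with coefficients `p`: the coefficient vanishes
whenever fewer than two of the parental indices equal `k`. -/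
def IsPurebred (m d : ℕ) (p : Coeffs m d) (k : Fin m) : Prop :=
  ∀ i : Fin d → Fin m, (Finset.univ.filter fun j => i j = k).card < 2 → p i k = 0

/-- The standard simplex `S^{m-1}`, viewed inside `ℝ^m` with the Euclidean metric. -/
def simplexE (m : ℕ) : Set (EuclideanSpace ℝ (Fin m)) :=
  {x | (∀ i, 0 ≤ x i) ∧ ∑ i, x i = 1}

/-- The polynomial stochastic operator associated to the coefficients `p`, as a self-map
of Euclidean space. -/
def PSOfun (m d : ℕ) (p : Coeffs m d) (x : EuclideanSpace ℝ (Fin m)) :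
    EuclideanSpace ℝ (Fin m) :=
  (WithLp.equiv 2 (Fin m → ℝ)).symm fun k => ∑ i : Fin d → Fin m, p i k * ∏ j, x (i j)

/-- The set `Λ = {e_1, …, e_m}` of vertices of the simplex. -/
def vertexSet (m : ℕ) : Set (EuclideanSpace ℝ (Fin m)) :=
  Set.range fun i : Fin m => EuclideanSpace.single i (1 : ℝ)

/-- The sets `Ū_h = ∪_{i} {x ∈ S^{m-1} : x_j ≤ h ∀ j ≠ i}`. -/
def Ubar (m : ℕ) (h : ℝ) : Set (EuclideanSpace ℝ (Fin m)) :=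
  {x | x ∈ simplexE m ∧ ∃ i : Fin m, ∀ j, j ≠ i → x j ≤ h}

/-- Hausdorff semi-distance `d(A,B) = sup_{a ∈ A} inf_{b ∈ B} |a - b|` (Euclidean). -/
def hsd {m : ℕ} (A B : Set (EuclideanSpace ℝ (Fin m))) : ℝ :=
  ⨆ a ∈ A, Metric.infDist a B

/-- The random dynamical system `φ(n,ω) = V_n(ω) ∘ ⋯ ∘ V_1(ω)`, `φ(0,ω) = id`, generated
by a sequence of (random) coefficient families. -/
def phiRDS {Ω : Type*} (m d : ℕ) (Vseq : ℕ → Ω → Coeffs m d) :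
    ℕ → Ω → EuclideanSpace ℝ (Fin m) → EuclideanSpace ℝ (Fin m)
  | 0, _ => id
  | n + 1, ω => PSOfun m d (Vseq n ω) ∘ phiRDS m d Vseq n ω

/-- The `ℓ¹` distance between the `d`-fold product distributions of two probability vectors is at
most `d` times the `ℓ¹` distance between the vectors. -/
lemma sum_abs_prod_sub_prod_le {m : ℕ} (x y : Fin m → ℝ) (hx : ∀ a, 0 ≤ x a)
    (hx1 : ∑ a, x a = 1) (hy : ∀ a, 0 ≤ y a) (hy1 : ∑ a, y a = 1) (d : ℕ) :
    ∑ i : Fin d → Fin m, |∏ j, x (i j) - ∏ j, y (i j)| ≤ d * ∑ a, |x a - y a| := by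
  induction d with
  | zero => simp
  | succ d ih =>
    have hY : ∑ i : Fin d → Fin m, ∏ j, y (i j) = 1 := by
      rw [← Fintype.sum_pow, hy1, one_pow]
    rw [← (Fin.consEquiv fun _ : Fin (d + 1) => Fin m).sum_comp, Fintype.sum_prod_type]
    simp only [Fin.consEquiv_apply, Fin.prod_univ_succ, Fin.cons_zero, Fin.cons_succ]
    calc ∑ a, ∑ i : Fin d → Fin m, |x a * ∏ j, x (i j) - y a * ∏ j, y (i j)|
        ≤ ∑ a, ∑ i : Fin d → Fin m,
          (x a * |∏ j, x (i j) - ∏ j, y (i j)| + |x a - y a| * ∏ j, y (i j)) := by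
          refine sum_le_sum fun a _ => sum_le_sum fun i _ => ?_
          have hp : 0 ≤ ∏ j, y (i j) := prod_nonneg fun j _ => hy _
          calc |x a * ∏ j, x (i j) - y a * ∏ j, y (i j)|
              = |x a * (∏ j, x (i j) - ∏ j, y (i j)) + (x a - y a) * ∏ j, y (i j)| := by
                congr 1; ring
            _ ≤ _ := by
                refine (abs_add_le _ _).trans_eq ?_
                rw [abs_mul, abs_mul, abs_of_nonneg (hx a), abs_of_nonneg hp]
      _ = ∑ i : Fin d → Fin m, |∏ j, x (i j) - ∏ j, y (i j)| + ∑ a, |x a - y a| := by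
          simp only [sum_add_distrib, ← mul_sum, ← sum_mul, hx1, hY, one_mul, mul_one]
      _ ≤ _ := by push_cast; linarith

lemma norm_le_sum_abs {m : ℕ} (u : EuclideanSpace ℝ (Fin m)) : ‖u‖ ≤ ∑ k, |u k| := by
  rw [EuclideanSpace.norm_eq]
  refine Real.sqrt_le_iff.2 ⟨sum_nonneg fun _ _ => abs_nonneg _, ?_⟩
  exact sum_sq_le_sq_sum_of_nonneg fun _ _ => abs_nonneg _

lemma sum_abs_le_mul_norm {m : ℕ} (u : EuclideanSpace ℝ (Fin m)) : ∑ k, |u k| ≤ m * ‖u‖ := by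
  simpa using sum_le_card_nsmul univ (fun k => |u k|) ‖u‖ fun k _ => PiLp.norm_apply_le u k

/-- A PSO of degree `d ≥ 2` is Lipschitz on the simplex with constant
`d·m` for the Euclidean norm. -/
theorem pso_lipschitz (m d : ℕ) (hm : 2 ≤ m) (hd : 2 ≤ d)
    (p : Coeffs m d) (hp : IsHeredity m d p)
    (x y : EuclideanSpace ℝ (Fin m)) (hx : x ∈ simplexE m) (hy : y ∈ simplexE m) :
    ‖PSOfun m d p x - PSOfun m d p y‖ ≤ (d : ℝ) * m * ‖x - y‖ := by
  obtain ⟨hp0, -, hp1⟩ := hp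
  calc ‖PSOfun m d p x - PSOfun m d p y‖
      ≤ ∑ k, |∑ i : Fin d → Fin m, p i k * (∏ j, x (i j) - ∏ j, y (i j))| := by
        refine (norm_le_sum_abs _).trans_eq (sum_congr rfl fun k _ => ?_)
        simp [PSOfun, mul_sub, sum_sub_distrib]
    _ ≤ ∑ k, ∑ i : Fin d → Fin m, p i k * |∏ j, x (i j) - ∏ j, y (i j)| := by
        refine sum_le_sum fun k _ => (abs_sum_le_sum_abs _ _).trans_eq ?_
        exact sum_congr rfl fun i _ => by rw [abs_mul, abs_of_nonneg (hp0 i k)]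
    _ = ∑ i : Fin d → Fin m, |∏ j, x (i j) - ∏ j, y (i j)| := by
        rw [sum_comm]
        simp only [← sum_mul, hp1, one_mul]
    _ ≤ d * ∑ a, |x a - y a| := sum_abs_prod_sub_prod_le x y hx.1 hx.2 hy.1 hy.2 d
    _ ≤ d * (m * ‖x - y‖) := by
        gcongr
        exact sum_abs_le_mul_norm (x - y)
    _ = d * m * ‖x - y‖ := by ring
end
end

section
/- Let m ≥ 2 and let V_1, …, V_{m-1} be Volterra polynomial stochastic operators of degree d ≥ 2 on S^{m-1} such that for each i ∈ {1,…,m−1} the type i is purebred in V_i. Then for every h ∈ [0,1] and every x ∈ S^{m-1} with x_i ≤ h for all i ∈ {1,…,m−1}, the composition satisfies (V_{m-1} ∘ ⋯ ∘ V_1 x)_i ≤ binom(d,2) · d^{2(m−2)} · h² for every i ∈ {1,…,m−1}. -/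
/-!
In a degree `d` PSO, if a type `k` can only be born when at least `r` of the `d` parents are of
type `k`, then a union bound over the `r`-element sets of parents gives
`(V x)_k ≤ binom(d, r) * x_k ^ r` (`PSOapply_le_choose_mul_pow`). Every type of a Volterra PSO
satisfies this with `r = 1`, and a purebred type with `r = 2`.

Counting types from `0`, the operators applied before the one in which type `i` is purebred thus
give `x_i ≤ d ^ i * h`, that operator turns this into `binom(d, 2) * d ^ (2 * i) * h ^ 2`, and the
remaining `m - 2 - i` operators contribute at most `d ^ (m - 2 - i)`. The total exponent of `d` is
`m - 2 + i ≤ 2 * (m - 2)`.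
-/

open Finset

/-- The standard simplex `S^{m-1}` inside `Fin m → ℝ`. -/
def simplexFun (m : ℕ) : Set (Fin m → ℝ) := {x | (∀ i, 0 ≤ x i) ∧ ∑ i, x i = 1}

/-- The polynomial stochastic operator associated to the coefficients `p`. -/
def PSOapply (m d : ℕ) (p : Coeffs m d) (x : Fin m → ℝ) : Fin m → ℝ :=
  fun k => ∑ i : Fin d → Fin m, p i k * ∏ j, x (i j)

/-- The probability that `d` independent parents drawn from `x` are of type `k` at every position
of `S` is `x k ^ #S`. -/
lemma sum_indicator_mul_prod {m d : ℕ} {x : Fin m → ℝ} (hx : ∑ i, x i = 1) (k : Fin m)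
    (S : Finset (Fin d)) :
    ∑ i : Fin d → Fin m, (if ∀ j ∈ S, i j = k then ∏ j, x (i j) else 0) = x k ^ S.card := by
  have key := Finset.prod_univ_sum (fun _ : Fin d => (univ : Finset (Fin m)))
    (fun j a => if j ∈ S → a = k then x a else 0)
  rw [Fintype.piFinset_univ] at key
  have hl : ∀ j : Fin d, ∑ a, (if j ∈ S → a = k then x a else 0) = if j ∈ S then x k else 1 := by
    intro j
    by_cases hj : j ∈ S <;> simp [hj, hx]
  simp only [hl, Finset.prod_ite_mem, Finset.univ_inter, Finset.prod_const] at key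
  rw [key]
  refine Finset.sum_congr rfl fun i _ => ?_
  split_ifs with hi
  · exact Finset.prod_congr rfl fun j _ => (if_pos (hi j)).symm
  · push Not at hi
    obtain ⟨j, hj, hne⟩ := hi
    exact (Finset.prod_eq_zero (mem_univ j) (if_neg fun H => hne (H hj))).symm

lemma IsHeredity.le_one {m d : ℕ} {p : Coeffs m d} (hp : IsHeredity m d p) (i : Fin d → Fin m)
    (k : Fin m) : p i k ≤ 1 := by
  rw [← hp.2.2 i]
  exact Finset.single_le_sum (fun k _ => hp.1 i k) (mem_univ k)

lemma PSOapply_mem_simplex {m d : ℕ} {p : Coeffs m d} (hp : IsHeredity m d p) {x : Fin m → ℝ}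
    (hx : x ∈ simplexFun m) : PSOapply m d p x ∈ simplexFun m := by
  refine ⟨fun k => Finset.sum_nonneg fun i _ =>
    mul_nonneg (hp.1 i k) (Finset.prod_nonneg fun j _ => hx.1 _), ?_⟩
  simp only [PSOapply]
  rw [Finset.sum_comm]
  simp only [← Finset.sum_mul, hp.2.2, one_mul]
  -- The empty set of constraints makes the indicator in `sum_indicator_mul_prod` trivial, but a
  -- type `k` is still needed to state it; one exists because the coordinates sum to one.
  obtain ⟨k⟩ : Nonempty (Fin m) := by
    by_contra hne
    rw [not_nonempty_iff] at hne
    simpa using hx.2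
  simpa using sum_indicator_mul_prod (d := d) hx.2 k ∅

/-- If offspring of type `k` require at least `r` parents of type `k`, then `(V x)_k` is at most
`binom(d, r) * x_k ^ r`, by the union bound over the `r`-element sets of parents. -/
lemma PSOapply_le_choose_mul_pow {m d r : ℕ} {p : Coeffs m d} (hp : IsHeredity m d p) {k : Fin m}
    (hk : ∀ i : Fin d → Fin m, (univ.filter fun j => i j = k).card < r → p i k = 0)
    {x : Fin m → ℝ} (hx : x ∈ simplexFun m) :
    PSOapply m d p x k ≤ (d.choose r : ℝ) * x k ^ r := by
  have hR : (d.choose r : ℝ) * x k ^ r = ∑ i : Fin d → Fin m, ∑ S ∈ powersetCard r univ,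
      (if ∀ j ∈ S, i j = k then ∏ j, x (i j) else 0) := by
    rw [Finset.sum_comm]
    simp_rw [sum_indicator_mul_prod hx.2 k]
    rw [Finset.sum_congr rfl fun S hS => by rw [(mem_powersetCard.1 hS).2]]
    simp
  rw [hR]
  refine Finset.sum_le_sum fun i _ => ?_
  have hprod : 0 ≤ ∏ j, x (i j) := Finset.prod_nonneg fun j _ => hx.1 _
  have hterm : ∀ S ∈ powersetCard r (univ : Finset (Fin d)),
      0 ≤ if ∀ j ∈ S, i j = k then ∏ j, x (i j) else 0 := by
    intro S _
    split_ifs <;> simp [hprod]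
  rcases lt_or_ge (univ.filter fun j => i j = k).card r with hc | hc
  · rw [hk i hc, zero_mul]
    exact Finset.sum_nonneg hterm
  · obtain ⟨S, hS, hcard⟩ := Finset.exists_subset_card_eq hc
    refine le_trans ?_ (Finset.single_le_sum hterm
      (mem_powersetCard.2 ⟨subset_univ S, hcard⟩))
    rw [if_pos fun j hj => (mem_filter.1 (hS hj)).2]
    exact mul_le_of_le_one_left hprod (hp.le_one i k)

lemma IsVolterra.PSOapply_le {m d : ℕ} {p : Coeffs m d} (hp : IsVolterra m d p) (k : Fin m)
    {x : Fin m → ℝ} (hx : x ∈ simplexFun m) : PSOapply m d p x k ≤ d * x k := by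
  have := PSOapply_le_choose_mul_pow (r := 1) (k := k) hp.1 (fun i hi => hp.2 i k fun j hj => by
    have : j ∈ univ.filter fun j => i j = k := by simp [hj]
    simp [Finset.card_eq_zero.1 (Nat.lt_one_iff.1 hi)] at this) hx
  simpa using this

/-- Let `V_1, …, V_{m-1}` be Volterra PSOs of degree `d ≥ 2` such that
type `i` is purebred in `V_i` (here types are indexed by `Fin m`, the operator `p j`
being purebred in type `j` for `j < m - 1`).  If `x ∈ S^{m-1}` satisfies `x_i ≤ h` for
all the first `m - 1` types, then all the first `m - 1` coordinates of the composition
`V_{m-1} ∘ ⋯ ∘ V_1 x` are at most `binom(d,2) · d^{2(m-2)} · h²`. -/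
theorem purebred_composition_estimate (m d : ℕ) (hm : 2 ≤ m) (hd : 2 ≤ d)
    (p : ℕ → Coeffs m d) (hp : ∀ j, j < m - 1 → IsVolterra m d (p j))
    (hpure : ∀ j (hj : j < m - 1),
      IsPurebred m d (p j) ⟨j, lt_of_lt_of_le hj (Nat.sub_le m 1)⟩)
    (h : ℝ) (hh : h ∈ Set.Icc (0 : ℝ) 1)
    (x : Fin m → ℝ) (hx : x ∈ simplexFun m)
    (hxh : ∀ i : Fin m, (i : ℕ) < m - 1 → x i ≤ h)
    (y : ℕ → Fin m → ℝ) (hy0 : y 0 = x)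
    (hyrec : ∀ j, j < m - 1 → y (j + 1) = PSOapply m d (p j) (y j)) :
    ∀ i : Fin m, (i : ℕ) < m - 1 →
      y (m - 1) i ≤ (d.choose 2 : ℝ) * (d : ℝ) ^ (2 * (m - 2)) * h ^ 2 := by
  intro i hi
  have hd1 : (1 : ℝ) ≤ d := by exact_mod_cast (by omega : 1 ≤ d)
  have hd0 : (0 : ℝ) ≤ d := by linarith
  have hsimp : ∀ j, j ≤ m - 1 → y j ∈ simplexFun m := by
    intro j
    induction j with
    | zero => intro _; rwa [hy0]
    | succ j ih =>
      intro hj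
      rw [hyrec j hj]
      exact PSOapply_mem_simplex (hp j hj).1 (ih (by omega))
  have hstep : ∀ j, j < m - 1 → y (j + 1) i ≤ d * y j i := by
    intro j hj
    rw [hyrec j hj]
    exact (hp j hj).PSOapply_le i (hsimp j hj.le)
  -- Iterated Volterra bound, from an arbitrary starting time.
  have hiter : ∀ a n, a + n ≤ m - 1 → y (a + n) i ≤ (d : ℝ) ^ n * y a i := by
    intro a n
    induction n with
    | zero => intro _; simp
    | succ n ih =>
      intro hn
      calc y (a + n + 1) i ≤ d * y (a + n) i := hstep _ (by omega)
        _ ≤ d * ((d : ℝ) ^ n * y a i) := by gcongr; exact ih (by omega)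
        _ = (d : ℝ) ^ (n + 1) * y a i := by ring
  have hbefore : y i i ≤ (d : ℝ) ^ (i : ℕ) * h := by
    have h1 := hiter 0 i (by omega)
    rw [zero_add, hy0] at h1
    exact h1.trans (by gcongr; exact hxh i hi)
  have hpurebred : y (i + 1) i ≤ (d.choose 2 : ℝ) * y i i ^ 2 := by
    rw [hyrec i hi]
    exact PSOapply_le_choose_mul_pow (hp i hi).1 (hpure i hi) (hsimp i hi.le)
  have hafter := hiter (i + 1) (m - 2 - i) (by omega)
  rw [show (i : ℕ) + 1 + (m - 2 - i) = m - 1 by omega] at hafter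
  have hnn : 0 ≤ y i i := (hsimp i hi.le).1 i
  calc y (m - 1) i ≤ (d : ℝ) ^ (m - 2 - i) * y (i + 1) i := hafter
    _ ≤ (d : ℝ) ^ (m - 2 - i) * ((d.choose 2 : ℝ) * ((d : ℝ) ^ (i : ℕ) * h) ^ 2) := by
        gcongr
        exact hpurebred.trans (by gcongr)
    _ = (d.choose 2 : ℝ) * (d : ℝ) ^ (m - 2 - i + 2 * i) * h ^ 2 := by ring
    _ ≤ (d.choose 2 : ℝ) * (d : ℝ) ^ (2 * (m - 2)) * h ^ 2 := by
        gcongr (d.choose 2 : ℝ) * (d : ℝ) ^ ?_ * h ^ 2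
        omega
end
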